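/- Let I be a finite index set with |I| ≥ 2, let 𝒜 = (A_i)_{i∈I} be a uniformly hyperbolic family in SL₂(ℝ) whose attractor K is not a singleton, let p be a nondegenerate probability vector, let ν be the stationary measure of (𝒜,p), and write τ(q) = τ(ν,q). Suppose q₀ > 1 is such that q ↦ τ(q) is differentiable at q₀, and let α₀ = τ'(q₀). If α₀·q₀ − τ(q₀) = 0, then τ(q) = α₀·q for every q ≥ q₀. -/

import Mathlib

/-!
The theorem follows from convexity and monotonicity properties shared by the `L^q` spectra of all
probability measures on `ℝP¹`.

For fixed `m`, Hölder's inequality makes `q ↦ log Σ ν(I)^q` convex, so `τ`, a lower limit of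
concave functions, is concave (`lqSpectrum_concaveOn`). Hence for `q ≥ q₀` the graph of `τ` lies
below its tangent at `q₀`, which is the line `α₀ q` because `τ(q₀) = α₀ q₀`. Conversely, `ℓ^q`
norms decrease in `q`, i.e. `Σ ν(I)^q ≤ (Σ ν(I)^{q₀})^{q/q₀}`, so `τ(q)/q` is nondecreasing
(`lqSpectrum_scale`) and `τ(q) ≥ (q/q₀) τ(q₀) = α₀ q`.

Since the liminf defining `τ` is taken in `ℝ`, the approximants must be shown to be bounded.
The bounds `-1` and `q` suffice (`approx_mem`); they use only that the `2^m` dyadic arcs cover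
`ℝP¹` and that each has mass at most `1`.
-/

open MeasureTheory Filter Set Topology

namespace Paper

noncomputable section

abbrev Mat2 : Type := Matrix (Fin 2) (Fin 2) ℝ
abbrev SL2 : Type := Matrix.SpecialLinearGroup (Fin 2) ℝ

/-- The operator norm on 2×2 real matrices induced by the Euclidean norm on ℝ². -/
def opNorm (M : Mat2) : ℝ := ‖(Matrix.toEuclideanLin M).toContinuousLinearMap‖

/-- The product `A_{i₁} ⋯ A_{i_n}` of the matrices along a word `w = (i₁, …, i_n)`. -/
def wordProd {ι : Type*} (A : ι → SL2) (w : List ι) : SL2 := (w.map A).prod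

/-- The product `p_{i₁} ⋯ p_{i_n}` of the weights along a word `w = (i₁, …, i_n)`. -/
def wordWeight {ι : Type*} (p : ι → ℝ) (w : List ι) : ℝ := (w.map p).prod

/-- A finite family in SL₂(ℝ) is uniformly hyperbolic if `‖A_i‖ ≥ c rⁿ` for all words of
length `n ≥ 1`. -/
def UniformlyHyperbolic {ι : Type*} (A : ι → SL2) : Prop :=
  ∃ c > (0:ℝ), ∃ r > (1:ℝ), ∀ w : List ι, w ≠ [] →
    c * r ^ w.length ≤ opNorm (wordProd A w : Mat2)

/-- Strongly Diophantine: distinct words of the same length give matrices that are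
exponentially separated. -/
def StronglyDiophantine {ι : Type*} (A : ι → SL2) : Prop :=
  ∃ c ∈ Set.Ioo (0:ℝ) 1, ∀ w w' : List ι, w ≠ [] → w.length = w'.length → w ≠ w' →
    c ^ w.length ≤ opNorm ((wordProd A w : Mat2) - (wordProd A w' : Mat2))

/-- The real projective line. -/
abbrev RP1 : Type := Projectivization ℝ (Fin 2 → ℝ)

lemma cos_sin_ne_zero (θ : ℝ) : ![Real.cos θ, Real.sin θ] ≠ 0 := by
  intro h
  have h0 : Real.cos θ = 0 := by simpa using congrFun h 0
  have h1 : Real.sin θ = 0 := by simpa using congrFun h 1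
  have h2 := Real.sin_sq_add_cos_sq θ
  rw [h0, h1] at h2
  norm_num at h2

/-- The point of ℝP¹ in the direction of angle `θ`. -/
def dir (θ : ℝ) : RP1 := Projectivization.mk ℝ ![Real.cos θ, Real.sin θ] (cos_sin_ne_zero θ)

/-- The quotient topology on ℝP¹ (expressed through the angle parametrization). -/
instance : TopologicalSpace RP1 := TopologicalSpace.coinduced dir inferInstance

/-- The Borel σ-algebra on ℝP¹. -/
instance : MeasurableSpace RP1 := borel RP1

/-- The natural action of `A ∈ SL₂(ℝ)` on ℝP¹, `A·[v] = [Av]`. -/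
def pact (A : SL2) : RP1 → RP1 :=
  Projectivization.map (Matrix.SpecialLinearGroup.toLin' A).toLinearMap
    (Matrix.SpecialLinearGroup.toLin' A).injective

/-- `K` is the attractor of the family `A`: the (unique) nonempty compact set with
`K = ⋃ᵢ Aᵢ·K`. -/
def IsAttractor {ι : Type*} [Fintype ι] (A : ι → SL2) (K : Set RP1) : Prop :=
  K.Nonempty ∧ IsCompact K ∧ K = ⋃ i : ι, pact (A i) '' K

/-- `ν` is stationary for the family `A` with weights `p`: `ν = Σ_i p_i (A_i)_* ν`. -/
def IsStationary {ι : Type*} [Fintype ι] (A : ι → SL2) (p : ι → ℝ) (ν : Measure RP1) : Prop :=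
  ν = ∑ i : ι, ENNReal.ofReal (p i) • Measure.map (pact (A i)) ν

/-- The `k`-th arc of the `2^{-m}` dyadic partition of ℝP¹. -/
def dyadic (m k : ℕ) : Set RP1 :=
  dir '' Set.Ico (Real.pi * k / 2 ^ m) (Real.pi * (k + 1) / 2 ^ m)

/-- The concentric doubled arc `2I` of the `k`-th arc of the `2^{-m}` dyadic partition. -/
def dyadic2 (m k : ℕ) : Set RP1 :=
  dir '' Set.Ico (Real.pi * ((k : ℝ) - 1 / 2) / 2 ^ m) (Real.pi * ((k : ℝ) + 3 / 2) / 2 ^ m)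

/-- `Σ_{I ∈ 𝒟_m} ν(I)^q`. -/
def lqSum (ν : Measure RP1) (q : ℝ) (m : ℕ) : ℝ :=
  ∑ k ∈ Finset.range (2 ^ m), ((ν (dyadic m k)).toReal) ^ q

/-- The L^q spectrum `τ(ν,q) = liminf_m −(1/m) log₂ Σ_{I∈𝒟_m} ν(I)^q`. -/
def lqSpectrum (ν : Measure RP1) (q : ℝ) : ℝ :=
  Filter.liminf (fun m : ℕ => -(1 / (m : ℝ)) * Real.logb 2 (lqSum ν q m)) Filter.atTop

/-- `(1/n) log₂ Σ_{i ∈ Iⁿ} p_i^q ‖A_i‖^{2s}`, the `n`-th approximant of the pressure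
`Ψ_q(s)`. -/
def psiAvg {ι : Type*} [Fintype ι] (A : ι → SL2) (p : ι → ℝ) (q s : ℝ) (n : ℕ) : ℝ :=
  (1 / (n : ℝ)) * Real.logb 2
    (∑ w : Fin n → ι,
      (wordWeight p (List.ofFn w)) ^ q * (opNorm (wordProd A (List.ofFn w) : Mat2)) ^ (2 * s))

/-- `t = τ̃(q)`: `t` is the unique positive zero of the pressure function `Ψ_q`. -/
def IsPressureZero {ι : Type*} [Fintype ι] (A : ι → SL2) (p : ι → ℝ) (q t : ℝ) : Prop :=
  0 < t ∧
  Filter.Tendsto (fun n => psiAvg A p q t n) Filter.atTop (nhds 0) ∧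
  ∀ s : ℝ, 0 < s → Filter.Tendsto (fun n => psiAvg A p q s n) Filter.atTop (nhds 0) → s = t

/-- The angle metric on ℝP¹: `d([v],[w]) = arccos(|⟨v,w⟩| / (‖v‖ ‖w‖))`. -/
def pdist (x y : RP1) : ℝ :=
  Real.arccos (|x.rep 0 * y.rep 0 + x.rep 1 * y.rep 1| /
    (Real.sqrt (x.rep 0 ^ 2 + x.rep 1 ^ 2) * Real.sqrt (y.rep 0 ^ 2 + y.rep 1 ^ 2)))

/-- The open ball in ℝP¹ of radius `r` and center `x`. -/
def pball (x : RP1) (r : ℝ) : Set RP1 := {y | pdist x y < r}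

instance : Fact (0 < Real.pi) := ⟨Real.pi_pos⟩

/-- The angle coordinate `Θ : ℝP¹ → ℝ/πℤ`. -/
def theta (x : RP1) : AddCircle Real.pi :=
  ((Complex.arg ((x.rep 0 : ℂ) + (x.rep 1 : ℂ) * Complex.I) : ℝ) : AddCircle Real.pi)

/-- `w` is a `2^m` stopping word for the family `A`. -/
def IsStopping {ι : Type*} (A : ι → SL2) (m : ℕ) (w : List ι) : Prop :=
  w ≠ [] ∧
  (∀ j : ℕ, 1 ≤ j → j < w.length → opNorm (wordProd A (w.take j) : Mat2) ^ 2 < (2:ℝ) ^ m) ∧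
  (2 : ℝ) ^ m ≤ opNorm (wordProd A w : Mat2) ^ 2

/-- `Σ_{i ∈ Ω_m} p_i^q`, the `L^q` sum over the `2^m` stopping words. -/
def stopSum {ι : Type*} [Fintype ι] (A : ι → SL2) (p : ι → ℝ) (q : ℝ) (m : ℕ) : ℝ :=
  ∑' w : List ι,
    Set.indicator {w : List ι | IsStopping A m w} (fun w => (wordWeight p w) ^ q) w

/-- `Σ_{J ∈ 𝒟_{s+m}(I)} ν(J)^q` for `I` the `k`-th arc of `𝒟_s`. -/
def localSum (ν : Measure RP1) (q : ℝ) (s m k : ℕ) : ℝ :=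
  ∑ j ∈ Finset.range (2 ^ (s + m)),
    Set.indicator {j : ℕ | (dyadic (s + m) j ∩ dyadic s k).Nonempty}
      (fun j => (ν (dyadic (s + m) j)).toReal ^ q) j


/-- Monotonicity and superadditivity of the liminf in one statement: a nonnegative combination of
bounded sequences that lies below `w` passes to the lower limit. -/
lemma liminf_comb {u v w : ℕ → ℝ} {a b c d e f x y : ℝ}
    (hu : ∀ n, u n ∈ Icc a b) (hv : ∀ n, v n ∈ Icc c d) (hw : ∀ n, w n ∈ Icc e f)
    (hx : 0 ≤ x) (hy : 0 ≤ y) (h : ∀ n, x * u n + y * v n ≤ w n) :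
    x * liminf u atTop + y * liminf v atTop ≤ liminf w atTop := by
  have bdd : ∀ {z : ℕ → ℝ} {s t : ℝ}, (∀ n, z n ∈ Icc s t) →
      IsBoundedUnder (· ≥ ·) atTop z := fun hz =>
    isBoundedUnder_of ⟨_, fun n => (hz n).1⟩
  have cobdd : IsCoboundedUnder (· ≥ ·) atTop w :=
    (isBoundedUnder_of ⟨f, fun n => (hw n).2⟩ :
      IsBoundedUnder (· ≤ ·) atTop w).isCoboundedUnder_ge
  refine le_of_forall_pos_le_add fun ε hε => ?_
  have hδ : 0 < ε / (x + y + 1) := by positivity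
  set δ := ε / (x + y + 1) with hδdef
  have hδε : (x + y + 1) * δ = ε := by rw [hδdef]; field_simp
  have key : x * liminf u atTop + y * liminf v atTop - ε ≤ liminf w atTop := by
    refine le_liminf_of_le cobdd ?_
    filter_upwards [eventually_lt_of_lt_liminf (sub_lt_self (liminf u atTop) hδ) (bdd hu),
      eventually_lt_of_lt_liminf (sub_lt_self (liminf v atTop) hδ) (bdd hv)] with n h1 h2
    have h3 := mul_le_mul_of_nonneg_left h1.le hx
    have h4 := mul_le_mul_of_nonneg_left h2.le hy
    have h5 := h n
    nlinarith
  linarith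

lemma dir_sub_int_mul_pi (θ : ℝ) (n : ℤ) : dir (θ - n * Real.pi) = dir θ := by
  unfold dir
  rw [Projectivization.mk_eq_mk_iff']
  refine ⟨(-1) ^ n, ?_⟩
  ext i
  fin_cases i
  · simp [Real.cos_sub_int_mul_pi]
  · simp [Real.sin_sub_int_mul_pi]

lemma exists_dir (x : RP1) : ∃ θ ∈ Ico (0 : ℝ) Real.pi, dir θ = x := by
  obtain ⟨θ, hθ⟩ : ∃ θ, dir θ = x := by
    induction x using Projectivization.ind with
    | h v hv =>
      refine ⟨Complex.arg ⟨v 0, v 1⟩, ?_⟩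
      set z : ℂ := ⟨v 0, v 1⟩ with hz
      have hz0 : z ≠ 0 := by
        intro h0
        apply hv
        ext i
        fin_cases i
        · simpa [hz] using congrArg Complex.re h0
        · simpa [hz] using congrArg Complex.im h0
      unfold dir
      rw [Projectivization.mk_eq_mk_iff']
      refine ⟨‖z‖⁻¹, ?_⟩
      ext i
      fin_cases i
      · have h := Complex.cos_arg hz0
        simp only [hz, div_eq_inv_mul] at h
        simp [hz, h]
      · simp [Complex.sin_arg, hz, div_eq_inv_mul]
  refine ⟨toIcoMod Real.pi_pos 0 θ, by simpa using toIcoMod_mem_Ico Real.pi_pos 0 θ, ?_⟩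
  rw [toIcoMod, zsmul_eq_mul, dir_sub_int_mul_pi, hθ]

lemma dyadic_cover (m : ℕ) : (univ : Set RP1) ⊆ ⋃ k ∈ Finset.range (2 ^ m), dyadic m k := by
  intro x _
  obtain ⟨θ, ⟨h0, h1⟩, rfl⟩ := exists_dir x
  have hπ := Real.pi_pos
  have hm : (0 : ℝ) < 2 ^ m := by positivity
  have ht : 0 ≤ θ * 2 ^ m / Real.pi := by positivity
  simp only [mem_iUnion, Finset.mem_range]
  refine ⟨⌊θ * 2 ^ m / Real.pi⌋₊, ?_, θ, ⟨?_, ?_⟩, rfl⟩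
  · rw [Nat.floor_lt ht, div_lt_iff₀ hπ]
    push_cast
    nlinarith
  · have := Nat.floor_le ht
    rw [le_div_iff₀ hπ] at this
    rw [div_le_iff₀ hm]
    linarith
  · have := Nat.lt_floor_add_one (θ * 2 ^ m / Real.pi)
    rw [div_lt_iff₀ hπ] at this
    rw [lt_div_iff₀ hm]
    linarith

/-- By pigeonhole, some dyadic arc of level `m` has mass at least `2^{-m}`. -/
lemma exists_large_dyadic (ν : Measure RP1) [IsProbabilityMeasure ν] (m : ℕ) :
    ∃ k ∈ Finset.range (2 ^ m), ((2 : ℝ) ^ m)⁻¹ ≤ (ν (dyadic m k)).toReal := by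
  by_contra! hlt
  have h1 : (1 : ℝ) ≤ ∑ k ∈ Finset.range (2 ^ m), (ν (dyadic m k)).toReal := by
    rw [← ENNReal.toReal_sum fun k _ => measure_ne_top _ _, ← ENNReal.toReal_one,
      ← measure_univ (μ := ν)]
    refine ENNReal.toReal_mono (ENNReal.sum_ne_top.2 fun k _ => measure_ne_top _ _) ?_
    exact (measure_mono (dyadic_cover m)).trans (measure_biUnion_finset_le _ _)
  have h2 : ∑ k ∈ Finset.range (2 ^ m), (ν (dyadic m k)).toReal <
      ∑ k ∈ Finset.range (2 ^ m), ((2 : ℝ) ^ m)⁻¹ :=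
    Finset.sum_lt_sum_of_nonempty (by simp) hlt
  simp at h2
  linarith

lemma lqSum_lower (ν : Measure RP1) [IsProbabilityMeasure ν] {q : ℝ} (hq : 0 < q) (m : ℕ) :
    (2 : ℝ) ^ (-(m * q)) ≤ lqSum ν q m := by
  obtain ⟨k, hk, hle⟩ := exists_large_dyadic ν m
  calc (2 : ℝ) ^ (-(m * q)) = (((2 : ℝ) ^ m)⁻¹) ^ q := by
        rw [← Real.rpow_natCast, ← Real.rpow_neg zero_le_two, ← Real.rpow_mul zero_le_two,
          neg_mul]
    _ ≤ (ν (dyadic m k)).toReal ^ q := Real.rpow_le_rpow (by positivity) hle hq.le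
    _ ≤ lqSum ν q m := by
        unfold lqSum
        exact Finset.single_le_sum
          (f := fun k => (ν (dyadic m k)).toReal ^ q) (fun i _ => by positivity) hk

lemma lqSum_pos (ν : Measure RP1) [IsProbabilityMeasure ν] {q : ℝ} (hq : 0 < q) (m : ℕ) :
    0 < lqSum ν q m :=
  (Real.rpow_pos_of_pos two_pos _).trans_le (lqSum_lower ν hq m)

lemma lqSum_upper (ν : Measure RP1) [IsProbabilityMeasure ν] {q : ℝ} (hq : 0 < q) (m : ℕ) :
    lqSum ν q m ≤ (2 : ℝ) ^ (m : ℝ) := by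
  calc lqSum ν q m ≤ ∑ k ∈ Finset.range (2 ^ m), (1 : ℝ) := by
        refine Finset.sum_le_sum fun k _ => ?_
        exact Real.rpow_le_one ENNReal.toReal_nonneg
          (ENNReal.toReal_le_of_le_ofReal zero_le_one (by simpa using prob_le_one)) hq.le
    _ = (2 : ℝ) ^ (m : ℝ) := by simp

/-- The sequence whose lower limit is the `L^q` spectrum lies in `[-1, q]`. -/
lemma approx_mem (ν : Measure RP1) [IsProbabilityMeasure ν] {q : ℝ} (hq : 0 < q) (m : ℕ) :
    -(1 / (m : ℝ)) * Real.logb 2 (lqSum ν q m) ∈ Icc (-1) q := by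
  rcases Nat.eq_zero_or_pos m with rfl | hm
  · simp [hq.le]
  have hm' : (0 : ℝ) < m := by exact_mod_cast hm
  have h1 : -(m * q) ≤ Real.logb 2 (lqSum ν q m) :=
    (Real.le_logb_iff_rpow_le one_lt_two (lqSum_pos ν hq m)).2 (lqSum_lower ν hq m)
  have h2 : Real.logb 2 (lqSum ν q m) ≤ m :=
    (Real.logb_le_iff_le_rpow one_lt_two (lqSum_pos ν hq m)).2 (lqSum_upper ν hq m)
  have h3 : -(1 / (m : ℝ)) * Real.logb 2 (lqSum ν q m) =
      -(Real.logb 2 (lqSum ν q m)) / m := by ring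
  rw [h3]
  refine ⟨?_, ?_⟩
  · rw [le_div_iff₀ hm']; linarith
  · rw [div_le_iff₀ hm']; linarith

/-- Log-convexity of `q ↦ Σ ν(I)^q`, from Hölder's inequality with exponents `1/x` and `1/y`. -/
lemma lqSum_holder (ν : Measure RP1) {q r x y : ℝ} (hq : 0 < q) (hr : 0 < r)
    (hx : 0 < x) (hy : 0 < y) (hxy : x + y = 1) (m : ℕ) :
    lqSum ν (x * q + y * r) m ≤ lqSum ν q m ^ x * lqSum ν r m ^ y := by
  have hconj : (1 / x).HolderConjugate (1 / y) := by
    rw [Real.holderConjugate_iff]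
    refine ⟨by rw [lt_div_iff₀ hx]; linarith, by simpa using hxy⟩
  have h := Real.inner_le_Lp_mul_Lq_of_nonneg (Finset.range (2 ^ m)) hconj
    (f := fun k => (ν (dyadic m k)).toReal ^ (x * q))
    (g := fun k => (ν (dyadic m k)).toReal ^ (y * r))
    (fun k _ => by positivity) (fun k _ => by positivity)
  have e1 : x * q * (1 / x) = q := by field_simp
  have e2 : y * r * (1 / y) = r := by field_simp
  simp only [← Real.rpow_mul ENNReal.toReal_nonneg, e1, e2, one_div_one_div] at h
  refine le_trans (le_of_eq ?_) h
  refine Finset.sum_congr rfl fun k _ => ?_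
  exact Real.rpow_add_of_nonneg ENNReal.toReal_nonneg (by positivity) (by positivity)

/-- Monotonicity of `ℓ^q` norms: for `b = ν(I)^q` and `S = Σ b` one has
`b^{r/q} ≤ b · S^{r/q - 1}`, since `b ≤ S`. -/
lemma lqSum_mono (ν : Measure RP1) [IsProbabilityMeasure ν] {q r : ℝ} (hq : 0 < q) (hqr : q ≤ r)
    (m : ℕ) : lqSum ν r m ≤ lqSum ν q m ^ (r / q) := by
  have hS := lqSum_pos ν hq m
  have hr1 : 0 ≤ r / q - 1 := by
    rw [sub_nonneg, le_div_iff₀ hq]; linarith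
  have e : lqSum ν q m ^ (r / q) =
      ∑ k ∈ Finset.range (2 ^ m), (ν (dyadic m k)).toReal ^ q * lqSum ν q m ^ (r / q - 1) := by
    rw [← Finset.sum_mul]
    change _ = lqSum ν q m * _
    conv_lhs => rw [show r / q = 1 + (r / q - 1) by ring, Real.rpow_add hS, Real.rpow_one]
  rw [e]
  refine Finset.sum_le_sum fun k hk => ?_
  have hb : (ν (dyadic m k)).toReal ^ q ≤ lqSum ν q m :=
    Finset.single_le_sum (f := fun k => (ν (dyadic m k)).toReal ^ q)
      (fun i _ => by positivity) hk
  have hr : r = q + q * (r / q - 1) := by field_simp; ring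
  calc (ν (dyadic m k)).toReal ^ r
      = (ν (dyadic m k)).toReal ^ q * ((ν (dyadic m k)).toReal ^ q) ^ (r / q - 1) := by
        conv_lhs => rw [hr, Real.rpow_add_of_nonneg ENNReal.toReal_nonneg hq.le (by positivity),
          Real.rpow_mul ENNReal.toReal_nonneg]
    _ ≤ _ := by gcongr

lemma lqSpectrum_concaveOn (ν : Measure RP1) [IsProbabilityMeasure ν] :
    ConcaveOn ℝ (Ioi 0) fun q => lqSpectrum ν q := by
  rw [concaveOn_iff_forall_pos]
  refine ⟨convex_Ioi 0, fun q hq r hr x y hx hy hxy => ?_⟩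
  rw [mem_Ioi] at hq hr
  simp only [smul_eq_mul]
  have hs : 0 < x * q + y * r := by positivity
  refine liminf_comb (approx_mem ν hq) (approx_mem ν hr) (approx_mem ν hs) hx.le hy.le
    fun m => ?_
  have hA := lqSum_pos ν hq m
  have hB := lqSum_pos ν hr m
  have h := Real.logb_le_logb_of_le one_lt_two (lqSum_pos ν hs m)
    (lqSum_holder ν hq hr hx hy hxy m)
  rw [Real.logb_mul (by positivity) (by positivity), Real.logb_rpow_eq_mul_logb_of_pos hA,
    Real.logb_rpow_eq_mul_logb_of_pos hB] at h
  have h' := mul_le_mul_of_nonneg_left h (show (0 : ℝ) ≤ 1 / m by positivity)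
  linarith

/-- `τ(q)/q` is nondecreasing. -/
lemma lqSpectrum_scale (ν : Measure RP1) [IsProbabilityMeasure ν] {q r : ℝ} (hq : 0 < q)
    (hqr : q ≤ r) : r / q * lqSpectrum ν q ≤ lqSpectrum ν r := by
  have hr := hq.trans_le hqr
  have h := liminf_comb (approx_mem ν hq) (approx_mem ν hq) (approx_mem ν hr)
    (x := r / q) (y := 0) (by positivity) le_rfl fun m => ?_
  · simpa [lqSpectrum] using h
  have h := Real.logb_le_logb_of_le one_lt_two (lqSum_pos ν hr m) (lqSum_mono ν hq hqr m)
  rw [Real.logb_rpow_eq_mul_logb_of_pos (lqSum_pos ν hq m)] at h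
  have h' := mul_le_mul_of_nonneg_left h (show (0 : ℝ) ≤ 1 / m by positivity)
  linarith

/-- once the Legendre transform vanishes, τ is linear from that point on. -/
theorem statement13 {ι : Type} [Fintype ι] (hcard : 2 ≤ Fintype.card ι)
    (A : ι → SL2) (hUH : UniformlyHyperbolic A)
    (K : Set RP1) (hK : IsAttractor A K) (hKnt : K.Nontrivial)
    (p : ι → ℝ) (hp : ∀ i, 0 < p i) (hp1 : ∑ i : ι, p i = 1)
    (ν : Measure RP1) [IsProbabilityMeasure ν] (hν : IsStationary A p ν) (hνK : ν K = 1)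
    (q₀ α₀ : ℝ) (hq₀ : 1 < q₀)
    (hder : HasDerivAt (fun q => lqSpectrum ν q) α₀ q₀)
    (hzero : α₀ * q₀ - lqSpectrum ν q₀ = 0) :
    ∀ q : ℝ, q₀ ≤ q → lqSpectrum ν q = α₀ * q := by
  intro q hq
  have h0 : 0 < q₀ := by linarith
  have hτ : lqSpectrum ν q₀ = α₀ * q₀ := by linarith
  rcases hq.eq_or_lt with rfl | hlt
  · exact hτ
  apply le_antisymm
  · have h := (lqSpectrum_concaveOn ν).slope_le_of_hasDerivAt (mem_Ioi.2 h0)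
      (mem_Ioi.2 (h0.trans hlt)) hlt hder
    rw [slope_def_field, div_le_iff₀ (sub_pos.2 hlt), hτ] at h
    linarith
  · have h := lqSpectrum_scale ν h0 hq
    rw [hτ] at h
    calc α₀ * q = q / q₀ * (α₀ * q₀) := by field_simp
      _ ≤ _ := h

end

end Paper
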